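/- Best rational approximants to odd functions are odd: Let B > 0, let f : [−B,B] → ℝ be continuous with f(−x) = −f(x) for all x ∈ [−B,B], and let m, n be nonnegative integers. If R is a best approximant of type (n,m) to f on [−B,B], then R(−x) = −R(x) for every x ∈ [−B,B]. -/

import Mathlib

/-- A rational function of type (n,m) on [A,B]. -/
def IsRatFun (A B : ℝ) (n m : ℕ) (R : ℝ → ℝ) : Prop :=
  ∃ P Q : Polynomial ℝ, P.natDegree ≤ n ∧ Q.natDegree ≤ m ∧
    (∀ x ∈ Set.Icc A B, Q.eval x ≠ 0) ∧
    ∀ x ∈ Set.Icc A B, R x = P.eval x / Q.eval x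

/-- R is a best approximant of type (n,m) to f on [A,B]. -/
def IsBestApprox (A B : ℝ) (n m : ℕ) (f R : ℝ → ℝ) : Prop :=
  IsRatFun A B n m R ∧
    ∀ S : ℝ → ℝ, IsRatFun A B n m S →
      (⨆ y : Set.Icc A B, |f y.1 - R y.1|) ≤ ⨆ y : Set.Icc A B, |f y.1 - S y.1|

/-!
The heart of the matter is that a best rational approximant to a continuous function is unique; if
`f` is odd then `x ↦ -R (-x)` is a best approximant along with `R`, so the two agree.

For uniqueness, let `R₁ = P₁ / Q₁` and `R₂ = P₂ / Q₂` be best with error `E` and positive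
denominators. The mediant `S = (P₁ + P₂) / (Q₁ + Q₂)` lies strictly between `R₁` and `R₂` wherever
they differ, so `|f - S| ≤ E`, with equality only where `R₁ = S`. Write `S = P / Q` in lowest terms.
If `R₁ ≠ S`, the nonzero polynomial `P₁ Q - Q₁ P` has few enough roots that some `p Q - q P` with
`deg p ≤ n` and `deg q ≤ m` interpolates `f - S` at all of them. Then `(P + ε p) / (Q + ε q)`
approximates `f` strictly better than `E` for small `ε > 0`, a contradiction.
-/

open Polynomial Set Filter Topology

section Bezout

variable {F : Type*} [Field F] {P Q h : F[X]}

lemma exists_mul_add_mul_eq_of_degree_le {d : WithBot ℕ} (hPQ : IsCoprime P Q)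
    (hP : P.degree ≤ d) (hh : h.degree ≤ d + Q.degree) :
    ∃ p q : F[X], p.degree ≤ d ∧ q.degree ≤ Q.degree ∧ p * Q + q * P = h := by
  rcases eq_or_ne Q 0 with rfl | hQ
  · have h_zero : h = 0 := by simpa using hh
    exact ⟨0, 0, by simp, le_rfl, by simp [h_zero]⟩
  obtain ⟨u, v, huv⟩ := hPQ
  have hdiv : Q * (h * u / Q) + h * u % Q = h * u := EuclideanDomain.div_add_mod _ _
  have hq : (h * u % Q).degree ≤ Q.degree := (degree_mod_lt _ hQ).le
  have hpq : (h * v + h * u / Q * P) * Q + h * u % Q * P = h := by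
    linear_combination h * huv + P * hdiv
  refine ⟨h * v + h * u / Q * P, h * u % Q, ?_, hq, hpq⟩
  rw [← WithBot.add_le_add_iff_right (degree_ne_bot.mpr hQ), ← degree_mul,
    eq_sub_of_add_eq hpq]
  refine (degree_sub_le _ _).trans (max_le hh ?_)
  rw [degree_mul, add_comm]
  gcongr

lemma exists_mul_sub_mul_eq_of_degree_le {d e : WithBot ℕ} (hPQ : IsCoprime P Q)
    (hP : P.degree ≤ d) (hQ : Q.degree ≤ e) (hh : h.degree ≤ max (d + Q.degree) (e + P.degree)) :
    ∃ p q : F[X], p.degree ≤ d ∧ q.degree ≤ e ∧ p * Q - q * P = h := by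
  rcases le_max_iff.mp hh with hh | hh
  · obtain ⟨p, q, hp, hq, hpq⟩ := exists_mul_add_mul_eq_of_degree_le hPQ hP hh
    exact ⟨p, -q, hp, by simpa using hq.trans hQ, by rw [← hpq]; ring⟩
  · obtain ⟨q, p, hq, hp, hpq⟩ := exists_mul_add_mul_eq_of_degree_le hPQ.symm hQ hh
    exact ⟨p, -q, hp.trans hP, by simpa using hq, by rw [← hpq]; ring⟩

lemma exists_eval_mul_sub_mul_eq_of_isRoot {P' Q' : F[X]} {n m : ℕ} (hPQ : IsCoprime P Q)
    (hP : P.natDegree ≤ n) (hQ : Q.natDegree ≤ m) (hP' : P'.natDegree ≤ n)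
    (hQ' : Q'.natDegree ≤ m) (hne : P' * Q - Q' * P ≠ 0) (v : F → F) :
    ∃ p q : F[X], p.natDegree ≤ n ∧ q.natDegree ≤ m ∧
      ∀ x, (P' * Q - Q' * P).IsRoot x → (p * Q - q * P).eval x = v x := by
  classical
  rw [natDegree_le_iff_degree_le] at hP hQ hP' hQ'
  set D := P' * Q - Q' * P
  have hroots : (D.roots.toFinset.card : WithBot ℕ) ≤ D.degree :=
    (Nat.cast_le.mpr (Multiset.toFinset_card_le _)).trans (card_roots hne)
  have hdeg_D : D.degree ≤ max (n + Q.degree) (m + P.degree) := by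
    refine (degree_sub_le _ _).trans ?_
    rw [degree_mul, degree_mul]
    gcongr
  have hinj : InjOn id (D.roots.toFinset : Set F) := Function.injective_id.injOn
  obtain ⟨p, q, hp, hq, hpq⟩ := exists_mul_sub_mul_eq_of_degree_le hPQ hP hQ
    (((Lagrange.degree_interpolate_lt v hinj).le.trans hroots).trans hdeg_D)
  refine ⟨p, q, natDegree_le_of_degree_le hp, natDegree_le_of_degree_le hq, fun x hx => ?_⟩
  rw [hpq]
  exact Lagrange.eval_interpolate_at_node v hinj (by simpa [hne] using hx)

end Bezout

section Perturbation

variable {X : Type*} [TopologicalSpace X]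

lemma forall_lt_or_forall_gt_of_isPreconnected {α : Type*} [LinearOrder α] [TopologicalSpace α]
    [OrderClosedTopology α] {s : Set X} {g : X → α} {a : α} (hs : IsPreconnected s)
    (hg : ContinuousOn g s) (hne : ∀ x ∈ s, g x ≠ a) :
    (∀ x ∈ s, a < g x) ∨ ∀ x ∈ s, g x < a := by
  by_contra! ⟨⟨x, hx, hxa⟩, y, hy, hya⟩
  obtain ⟨z, hz, hza⟩ := hs.intermediate_value hx hy hg ⟨hxa, hya⟩
  exact hne z hz hza

variable {e : X → ℝ} {g : ℝ × X → ℝ} {E : ℝ}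

lemma eventually_nhds_abs_sub_mul_lt {x : X} (he : ContinuousAt e x) (hg : ContinuousAt g (0, x))
    (hle : ∀ y, |e y| ≤ E) (hpos : |e x| = E → 0 < e x * g (0, x)) :
    ∀ᶠ z : ℝ × X in 𝓝 (0, x), 0 < z.1 → |e z.2 - z.1 * g z| < E := by
  rcases (hle x).lt_or_eq with hlt | heq
  · have hcont : ContinuousAt (fun z : ℝ × X => |e z.2 - z.1 * g z|) (0, x) := by fun_prop
    filter_upwards [hcont.eventually_lt_const (by simpa using hlt)] with z hz _ using hz
  · have hcont : ContinuousAt (fun z : ℝ × X => 2 * (e z.2 * g z) - z.1 * g z ^ 2) (0, x) := by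
      fun_prop
    filter_upwards [hcont.eventually_const_lt (u := 0) (by simpa using hpos heq)] with z hz hε
    have hsq : (e z.2 - z.1 * g z) ^ 2
        = e z.2 ^ 2 - z.1 * (2 * (e z.2 * g z) - z.1 * g z ^ 2) := by ring
    have hlt : |e z.2 - z.1 * g z| < |e z.2| := by
      rw [← sq_lt_sq, hsq]
      exact sub_lt_self _ (mul_pos hε hz)
    exact hlt.trans_le (hle z.2)

lemma eventually_forall_abs_sub_mul_lt [CompactSpace X] (he : Continuous e)
    (hg : ∀ x, ContinuousAt g (0, x)) (hle : ∀ x, |e x| ≤ E)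
    (hpos : ∀ x, |e x| = E → 0 < e x * g (0, x)) :
    ∀ᶠ ε in 𝓝[>] (0 : ℝ), ∀ x, |e x - ε * g (ε, x)| < E := by
  have hnhds : ∀ᶠ ε in 𝓝 (0 : ℝ), ∀ x ∈ univ, 0 < ε → |e x - ε * g (ε, x)| < E :=
    isCompact_univ.eventually_forall_of_forall_eventually fun x _ =>
      eventually_nhds_abs_sub_mul_lt he.continuousAt (hg x) hle (hpos x)
  filter_upwards [hnhds.filter_mono nhdsWithin_le_nhds, self_mem_nhdsWithin] with ε hε hε_pos x
  exact hε x (mem_univ x) hε_pos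

end Perturbation

/-- The absolute error of `R` as an approximant to `f` on `[A, B]`, spelled as in `IsBestApprox`. It
is meaningful only if `f - R` is bounded there and `A ≤ B`; otherwise its value is `0`. -/
noncomputable def supError (A B : ℝ) (f R : ℝ → ℝ) : ℝ :=
  ⨆ y : Icc A B, |f y.1 - R y.1|

section SupError

variable {A B : ℝ} {f g R : ℝ → ℝ}

lemma abs_sub_le_supError (hf : ContinuousOn f (Icc A B)) (hR : ContinuousOn R (Icc A B)) {x : ℝ}
    (hx : x ∈ Icc A B) : |f x - R x| ≤ supError A B f R := by
  rw [supError, ← sSup_image' (f := fun y => |f y - R y|)]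
  exact (hf.sub hR).abs.le_sSup_image_Icc hx

lemma supError_lt_iff (hAB : A ≤ B) (hf : ContinuousOn f (Icc A B))
    (hR : ContinuousOn R (Icc A B)) {E : ℝ} :
    supError A B f R < E ↔ ∀ x ∈ Icc A B, |f x - R x| < E := by
  rw [supError, ← sSup_image' (f := fun y => |f y - R y|)]
  exact isCompact_Icc.sSup_lt_iff_of_continuous (nonempty_Icc.mpr hAB) (hf.sub hR).abs E

lemma supError_congr_left (hfg : EqOn f g (Icc A B)) : supError A B f R = supError A B g R :=
  iSup_congr fun y => by rw [hfg y.2]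

lemma supError_neg_comp_neg :
    supError (-B) (-A) (fun x => -f (-x)) (fun x => -R (-x)) = supError A B f R :=
  ((Equiv.neg ℝ).subtypeEquiv fun x => by simp [le_neg, neg_le, and_comm]).iSup_congr fun y => by
    simp [abs_sub_comm, neg_add_eq_sub]

end SupError

namespace IsRatFun

variable {A B : ℝ} {n m : ℕ} {f R S R₁ R₂ : ℝ → ℝ}

lemma continuousOn (hR : IsRatFun A B n m R) : ContinuousOn R (Icc A B) := by
  obtain ⟨P, Q, -, -, hQ, hRPQ⟩ := hR
  exact (P.continuousOn.div Q.continuousOn hQ).congr hRPQ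

lemma neg_comp_neg (hR : IsRatFun A B n m R) : IsRatFun (-B) (-A) n m fun x => -R (-x) := by
  obtain ⟨P, Q, hP, hQ, hQ_ne, hRPQ⟩ := hR
  have hneg : ∀ x ∈ Icc (-B) (-A), -x ∈ Icc A B := fun x hx => ⟨le_neg.mpr hx.2, neg_le.mpr hx.1⟩
  refine ⟨-P.comp (-X), Q.comp (-X), by simpa [natDegree_comp], by simpa [natDegree_comp],
    fun x hx => by simpa using hQ_ne _ (hneg x hx), fun x hx => ?_⟩
  simp [hRPQ _ (hneg x hx), neg_div]

lemma exists_isCoprime (hAB : A ≤ B) (hR : IsRatFun A B n m R) :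
    ∃ P Q : ℝ[X], IsCoprime P Q ∧ P.natDegree ≤ n ∧ Q.natDegree ≤ m ∧
      (∀ x ∈ Icc A B, Q.eval x ≠ 0) ∧ ∀ x ∈ Icc A B, R x = P.eval x / Q.eval x := by
  classical
  obtain ⟨P, Q, hP, hQ, hQ_ne, hRPQ⟩ := hR
  have hQ0 : Q ≠ 0 := by
    rintro rfl
    exact hQ_ne A (left_mem_Icc.mpr hAB) eval_zero
  have hP_mul : gcd P Q * (P / gcd P Q) = P :=
    EuclideanDomain.mul_div_cancel' (gcd_ne_zero_of_right hQ0) (gcd_dvd_left P Q)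
  have hQ_mul : gcd P Q * (Q / gcd P Q) = Q :=
    EuclideanDomain.mul_div_cancel' (gcd_ne_zero_of_right hQ0) (gcd_dvd_right P Q)
  have heval_ne : ∀ x ∈ Icc A B, (gcd P Q).eval x ≠ 0 ∧ (Q / gcd P Q).eval x ≠ 0 := fun x hx => by
    rw [← mul_ne_zero_iff, ← eval_mul, hQ_mul]
    exact hQ_ne x hx
  refine ⟨P / gcd P Q, Q / gcd P Q, isCoprime_div_gcd_div_gcd hQ0,
    (natDegree_le_natDegree (degree_div_le _ _)).trans hP,
    (natDegree_le_natDegree (degree_div_le _ _)).trans hQ,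
    fun x hx => (heval_ne x hx).2, fun x hx => ?_⟩
  rw [hRPQ x hx, ← mul_div_mul_left (eval x (P / gcd P Q)) _ (heval_ne x hx).1, ← eval_mul,
    ← eval_mul, hP_mul, hQ_mul]

lemma exists_isCoprime_pos (hAB : A ≤ B) (hR : IsRatFun A B n m R) :
    ∃ P Q : ℝ[X], IsCoprime P Q ∧ P.natDegree ≤ n ∧ Q.natDegree ≤ m ∧
      (∀ x ∈ Icc A B, 0 < Q.eval x) ∧ ∀ x ∈ Icc A B, R x = P.eval x / Q.eval x := by
  obtain ⟨P, Q, hPQ, hP, hQ, hQ_ne, hRPQ⟩ := hR.exists_isCoprime hAB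
  rcases forall_lt_or_forall_gt_of_isPreconnected isPreconnected_Icc Q.continuousOn hQ_ne
    with hQ_pos | hQ_neg
  · exact ⟨P, Q, hPQ, hP, hQ, hQ_pos, hRPQ⟩
  · exact ⟨-P, -Q, hPQ.neg_neg, by simpa using hP, by simpa using hQ,
      fun x hx => by simpa using hQ_neg x hx, fun x hx => by simpa using hRPQ x hx⟩

lemma exists_mem_openSegment (hAB : A ≤ B) (hR₁ : IsRatFun A B n m R₁)
    (hR₂ : IsRatFun A B n m R₂) :
    ∃ S, IsRatFun A B n m S ∧ ∀ x ∈ Icc A B, S x ∈ openSegment ℝ (R₁ x) (R₂ x) := by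
  obtain ⟨P₁, Q₁, -, hP₁, hQ₁, hQ₁_pos, hR₁⟩ := hR₁.exists_isCoprime_pos hAB
  obtain ⟨P₂, Q₂, -, hP₂, hQ₂, hQ₂_pos, hR₂⟩ := hR₂.exists_isCoprime_pos hAB
  have hQ_pos : ∀ x ∈ Icc A B, 0 < (Q₁ + Q₂).eval x := fun x hx => by
    rw [eval_add]
    exact add_pos (hQ₁_pos x hx) (hQ₂_pos x hx)
  refine ⟨fun x => (P₁ + P₂).eval x / (Q₁ + Q₂).eval x,
    ⟨P₁ + P₂, Q₁ + Q₂, natDegree_add_le_of_degree_le hP₁ hP₂, natDegree_add_le_of_degree_le hQ₁ hQ₂,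
      fun x hx => (hQ_pos x hx).ne', fun _ _ => rfl⟩, fun x hx => ?_⟩
  have hQ₁x := hQ₁_pos x hx
  have hQ₂x := hQ₂_pos x hx
  refine ⟨Q₁.eval x / (Q₁ + Q₂).eval x, Q₂.eval x / (Q₁ + Q₂).eval x,
    div_pos hQ₁x (hQ_pos x hx), div_pos hQ₂x (hQ_pos x hx), ?_, ?_⟩
  · rw [← add_div, ← eval_add, div_self (hQ_pos x hx).ne']
  · simp only [hR₁ x hx, hR₂ x hx, smul_eq_mul, eval_add]
    field_simp

lemma exists_forall_abs_sub_lt_of_mul_pos {P Q p q : ℝ[X]} {E : ℝ}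
    (hf : ContinuousOn f (Icc A B)) (hP : P.natDegree ≤ n) (hQ : Q.natDegree ≤ m)
    (hp : p.natDegree ≤ n) (hq : q.natDegree ≤ m) (hQ_pos : ∀ x ∈ Icc A B, 0 < Q.eval x)
    (hle : ∀ x ∈ Icc A B, |f x - P.eval x / Q.eval x| ≤ E)
    (hpos : ∀ x ∈ Icc A B, |f x - P.eval x / Q.eval x| = E →
      0 < (f x - P.eval x / Q.eval x) * (p * Q - q * P).eval x) :
    ∃ T, IsRatFun A B n m T ∧ ∀ x ∈ Icc A B, |f x - T x| < E := by
  let e : Icc A B → ℝ := fun y => f y - P.eval y.1 / Q.eval y.1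
  let g : ℝ × Icc A B → ℝ := fun z =>
    (p * Q - q * P).eval z.2.1 / (Q.eval z.2.1 * (Q.eval z.2.1 + z.1 * q.eval z.2.1))
  have he : Continuous e := (hf.sub
    (P.continuousOn.div Q.continuousOn fun x hx => (hQ_pos x hx).ne')).domRestrict
  have hg : ∀ y, ContinuousAt g (0, y) := fun y => by
    have hQy := hQ_pos y y.2
    exact ContinuousAt.div (by fun_prop) (by fun_prop) (by simp [hQy.ne'])
  have hlt : ∀ᶠ ε in 𝓝[>] (0 : ℝ), ∀ y, |e y - ε * g (ε, y)| < E :=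
    eventually_forall_abs_sub_mul_lt he hg (fun y => hle y y.2) fun y hy => by
      have hQy := hQ_pos y y.2
      have := div_pos (hpos y y.2 hy) (mul_pos hQy hQy)
      simpa [e, g, mul_div_assoc] using this
  have hden : ∀ᶠ ε in 𝓝 (0 : ℝ), ∀ x ∈ Icc A B, 0 < Q.eval x + ε * q.eval x := by
    refine isCompact_Icc.eventually_forall_of_forall_eventually fun x hx => ?_
    have hcont : ContinuousAt (fun z : ℝ × ℝ => Q.eval z.2 + z.1 * q.eval z.2) (0, x) := by fun_prop
    exact hcont.eventually_const_lt (by simpa using hQ_pos x hx)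
  obtain ⟨ε, hltε, hdenε⟩ := (hlt.and (hden.filter_mono nhdsWithin_le_nhds)).exists
  refine ⟨fun x => (P + C ε * p).eval x / (Q + C ε * q).eval x,
    ⟨P + C ε * p, Q + C ε * q,
      natDegree_add_le_of_degree_le hP ((natDegree_C_mul_le _ _).trans hp),
      natDegree_add_le_of_degree_le hQ ((natDegree_C_mul_le _ _).trans hq),
      fun x hx => by simpa using (hdenε x hx).ne', fun _ _ => rfl⟩, fun x hx => ?_⟩
  have hQx := (hQ_pos x hx).ne'
  have hdenx := (hdenε x hx).ne'
  convert hltε ⟨x, hx⟩ using 2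
  simp only [e, g, eval_add, eval_sub, eval_mul, eval_C]
  field_simp
  ring

lemma exists_forall_abs_sub_lt_of_ne {E : ℝ} (hf : ContinuousOn f (Icc A B))
    (hR : IsRatFun A B n m R) (hS : IsRatFun A B n m S)
    (hle : ∀ x ∈ Icc A B, |f x - S x| ≤ E)
    (hlt : ∀ x ∈ Icc A B, R x ≠ S x → |f x - S x| < E) (hne : ∃ x ∈ Icc A B, R x ≠ S x) :
    ∃ T, IsRatFun A B n m T ∧ ∀ x ∈ Icc A B, |f x - T x| < E := by
  obtain ⟨x₀, hx₀, hne⟩ := hne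
  have hE : 0 < E := (abs_nonneg _).trans_lt (hlt x₀ hx₀ hne)
  have hAB : A ≤ B := hx₀.1.trans hx₀.2
  obtain ⟨P', Q', hP', hQ', hQ'_ne, hRPQ⟩ := hR
  obtain ⟨P, Q, hPQ, hP, hQ, hQ_pos, hSPQ⟩ := hS.exists_isCoprime_pos hAB
  have heq_iff : ∀ x ∈ Icc A B, R x = S x ↔ (P' * Q - Q' * P).IsRoot x := fun x hx => by
    rw [hRPQ x hx, hSPQ x hx, div_eq_div_iff (hQ'_ne x hx) (hQ_pos x hx).ne', IsRoot.def,
      eval_sub, eval_mul, eval_mul, sub_eq_zero, mul_comm (P.eval x)]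
  have hD : P' * Q - Q' * P ≠ 0 := fun h => hne ((heq_iff x₀ hx₀).mpr (by simp [h]))
  obtain ⟨p, q, hp, hq, hpq⟩ :=
    exists_eval_mul_sub_mul_eq_of_isRoot hPQ hP hQ hP' hQ' hD fun x => f x - S x
  refine exists_forall_abs_sub_lt_of_mul_pos hf hP hQ hp hq hQ_pos
    (fun x hx => hSPQ x hx ▸ hle x hx) fun x hx hext => ?_
  rw [← hSPQ x hx] at hext ⊢
  have hRS : R x = S x := by_contra fun h => (hlt x hx h).ne hext
  rw [hpq x ((heq_iff x hx).mp hRS)]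
  exact mul_self_pos.mpr (abs_pos.mp (hext ▸ hE))

end IsRatFun

namespace IsBestApprox

variable {A B : ℝ} {n m : ℕ} {f g R R₁ R₂ : ℝ → ℝ}

lemma congr_left (hR : IsBestApprox A B n m f R) (hfg : EqOn f g (Icc A B)) :
    IsBestApprox A B n m g R :=
  ⟨hR.1, fun S hS => (supError_congr_left hfg).symm.trans_le <|
    (hR.2 S hS).trans_eq (supError_congr_left hfg)⟩

lemma neg_comp_neg (hR : IsBestApprox A B n m f R) :
    IsBestApprox (-B) (-A) n m (fun x => -f (-x)) fun x => -R (-x) := by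
  refine ⟨hR.1.neg_comp_neg, fun S hS => ?_⟩
  have hS' : IsRatFun A B n m fun x => -S (-x) := by simpa using hS.neg_comp_neg
  calc supError (-B) (-A) (fun x => -f (-x)) (fun x => -R (-x))
      = supError A B f R := supError_neg_comp_neg
    _ ≤ supError A B f fun x => -S (-x) := hR.2 _ hS'
    _ = supError (-B) (-A) (fun x => -f (-x)) S := by
      simpa using (supError_neg_comp_neg (f := f) (R := fun x => -S (-x))).symm

theorem eqOn (hf : ContinuousOn f (Icc A B)) (hR₁ : IsBestApprox A B n m f R₁)
    (hR₂ : IsBestApprox A B n m f R₂) : EqOn R₁ R₂ (Icc A B) := by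
  intro x hx
  have hAB : A ≤ B := hx.1.trans hx.2
  set E := supError A B f R₁
  have hE₂ : supError A B f R₂ = E := le_antisymm (hR₂.2 R₁ hR₁.1) (hR₁.2 R₂ hR₂.1)
  have hball₁ : ∀ y ∈ Icc A B, R₁ y ∈ Metric.closedBall (f y) E := fun y hy => by
    rw [Metric.mem_closedBall', Real.dist_eq]
    exact abs_sub_le_supError hf hR₁.1.continuousOn hy
  have hball₂ : ∀ y ∈ Icc A B, R₂ y ∈ Metric.closedBall (f y) E := fun y hy => by
    rw [Metric.mem_closedBall', Real.dist_eq, ← hE₂]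
    exact abs_sub_le_supError hf hR₂.1.continuousOn hy
  obtain ⟨S, hS, hmem⟩ := hR₁.1.exists_mem_openSegment hAB hR₂.1
  have hle : ∀ y ∈ Icc A B, |f y - S y| ≤ E := fun y hy => by
    rw [← Real.dist_eq, ← Metric.mem_closedBall']
    exact (convex_closedBall (f y) E).openSegment_subset (hball₁ y hy) (hball₂ y hy) (hmem y hy)
  have hlt : ∀ y ∈ Icc A B, R₁ y ≠ S y → |f y - S y| < E := fun y hy hne => by
    rw [← Real.dist_eq, ← Metric.mem_ball']
    refine openSegment_subset_ball_of_ne (hball₁ y hy) (hball₂ y hy) (fun h => hne ?_) (hmem y hy)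
    simpa [h, eq_comm] using hmem y hy
  have hR₁S : ∀ y ∈ Icc A B, R₁ y = S y := by
    by_contra! hne
    obtain ⟨T, hT, hT_lt⟩ := hR₁.1.exists_forall_abs_sub_lt_of_ne hf hS hle hlt hne
    exact (hR₁.2 T hT).not_gt ((supError_lt_iff hAB hf hT.continuousOn).mpr hT_lt)
  have hmem_x := hmem x hx
  rw [← hR₁S x hx] at hmem_x
  exact left_mem_openSegment_iff.mp hmem_x

end IsBestApprox

/-- Best rational approximants to odd functions are odd. -/
theorem best_approx_of_odd_is_odd
    (B : ℝ) (hB : 0 < B) (f : ℝ → ℝ) (hf : ContinuousOn f (Set.Icc (-B) B))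
    (hfodd : ∀ x ∈ Set.Icc (-B) B, f (-x) = -f x)
    (m n : ℕ) (R : ℝ → ℝ) (hR : IsBestApprox (-B) B n m f R) :
    ∀ x ∈ Set.Icc (-B) B, R (-x) = -R x := by
  have hfodd' : EqOn (fun x => -f (-x)) f (Icc (-B) B) := fun x hx => by
    simp only [hfodd x hx, neg_neg]
  have hreflect : IsBestApprox (-B) B n m f fun x => -R (-x) := by
    have := hR.neg_comp_neg
    rw [neg_neg] at this
    exact this.congr_left hfodd'
  exact fun x hx => neg_eq_iff_eq_neg.mp (hreflect.eqOn hf hR hx)
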